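/- Fix reals α̂ > 0 and δ > 0. For each integer n large enough that q_n := δ·(log n)²/n ∈ (0,1), set τ_n := log(1/q_n), let λ_n be positive integers with λ_n·(log n)²/n → 0 as n → ∞, and define Δ_n := (1 − (1−q_n)^{λ_n})/(λ_n·q_n) and T_n := n·q_n·Δ_n·log(1 + τ_n/(n·α̂·q_n·Δ_n)). Then T_n·α̂/log n → 1 as n → ∞; that is, T_n is asymptotically equivalent to (log n)/α̂. -/

import Mathlib

open Filter Real

/-!
Since `1 - m q ≤ (1 - q) ^ m` and `(1 + m q) (1 - q) ^ m ≤ (1 - q ^ 2) ^ m ≤ 1`, the full-buffer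
probability lies between `1 / (1 + m q)` and `1`, hence tends to `1` when `m q → 0`. With
`s = n ahat q Δ ~ n ahat q`, the throughput times `ahat` is `s log (1 + τ / s)`. As
`τ ~ log n` is negligible against `n q = δ (log n) ^ 2`, the argument `τ / s` tends to `0`, so
`log (1 + y) ~ y` gives `s log (1 + τ / s) ~ τ ~ log n`.
-/

open Asymptotics Topology

section

variable {ι : Type*} {l : Filter ι}

lemma isEquivalent_log_one_add_nhds_zero : (fun y : ℝ => log (1 + y)) ~[𝓝 0] fun y => y := by
  simpa [IsEquivalent, Pi.sub_def] using
    hasDerivAt_iff_isLittleO_nhds_zero.1 (hasDerivAt_log one_ne_zero)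

lemma isEquivalent_mul_log_one_add_div {s τ : ι → ℝ} (h : τ =o[l] s) :
    (fun i => s i * log (1 + τ i / s i)) ~[l] τ := by
  have hlog : (fun i => log (1 + τ i / s i)) ~[l] fun i => τ i / s i :=
    isEquivalent_log_one_add_nhds_zero.comp_tendsto h.tendsto_div_nhds_zero
  have hcancel : (fun i => s i * (τ i / s i)) =ᶠ[l] τ := by
    filter_upwards [h.eventually_mul_div_cancel] with i hi
    rwa [mul_comm]
  exact (IsEquivalent.refl.mul hlog).trans_eventuallyEq hcancel

/-- The full-buffer probability `Δ` of a link with activity probability `q` whose packets arrive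
every `m` slots (division by zero gives `0` when `m = 0` or `q = 0`). -/
noncomputable def fullBufferProb (m : ℕ) (q : ℝ) : ℝ :=
  (1 - (1 - q) ^ m) / (m * q)

/-- The effective throughput of `N` links with activity probability `q`, constant interarrival
time `m` and mean interference gain `ahat`; the activation threshold is `τ = log (1 / q)`. The
network size `N` is a real number, so that it need not run through the integers. -/
noncomputable def effectiveThroughput (ahat N q : ℝ) (m : ℕ) : ℝ :=
  N * q * fullBufferProb m q * log (1 + log (1 / q) / (N * ahat * q * fullBufferProb m q))

/-- The activity probability `δ (log x) ^ 2 / x` of the on-off scheme with `x` links. -/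
noncomputable def activityProb (δ x : ℝ) : ℝ :=
  δ * log x ^ 2 / x

lemma fullBufferProb_le_one {m : ℕ} {q : ℝ} (hq0 : 0 ≤ q) (hq2 : q ≤ 2) :
    fullBufferProb m q ≤ 1 := by
  have bernoulli : 1 + m * -q ≤ (1 + -q) ^ m := one_add_mul_le_pow (by linarith) m
  refine div_le_one_of_le₀ ?_ (by positivity)
  rw [sub_eq_add_neg 1 q]
  linarith

lemma one_add_mul_mul_one_sub_pow_le_one {q : ℝ} (m : ℕ) (hq0 : 0 ≤ q) (hq1 : q ≤ 1) :
    (1 + m * q) * (1 - q) ^ m ≤ 1 :=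
  calc (1 + m * q) * (1 - q) ^ m
      ≤ (1 + q) ^ m * (1 - q) ^ m :=
        mul_le_mul_of_nonneg_right (one_add_mul_le_pow (by linarith) m)
          (pow_nonneg (by linarith) m)
    _ = (1 - q ^ 2) ^ m := by rw [← mul_pow]; ring
    _ ≤ 1 := pow_le_one₀ (by nlinarith) (by nlinarith)

lemma one_div_one_add_mul_le_fullBufferProb {m : ℕ} {q : ℝ} (hm : 0 < m) (hq0 : 0 < q)
    (hq1 : q ≤ 1) : 1 / (1 + m * q) ≤ fullBufferProb m q := by
  rw [fullBufferProb, div_le_div_iff₀ (by positivity) (by positivity)]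
  linarith [one_add_mul_mul_one_sub_pow_le_one m hq0.le hq1]

lemma tendsto_fullBufferProb {m : ι → ℕ} {q : ι → ℝ}
    (hm : ∀ᶠ i in l, 0 < m i) (hq : ∀ᶠ i in l, 0 < q i)
    (hmq : Tendsto (fun i => m i * q i) l (𝓝 0)) :
    Tendsto (fun i => fullBufferProb (m i) (q i)) l (𝓝 1) := by
  have hq1 : ∀ᶠ i in l, q i ≤ 1 := by
    filter_upwards [hm, hq, hmq.eventually_le_const one_pos] with i hmi hqi hmqi
    exact (le_mul_of_one_le_left hqi.le (by exact_mod_cast hmi)).trans hmqi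
  have hlower : Tendsto (fun i => 1 / (1 + m i * q i)) l (𝓝 1) := by
    simpa using (hmq.const_add 1).inv₀ (by norm_num)
  refine tendsto_of_tendsto_of_tendsto_of_le_of_le' hlower tendsto_const_nhds ?_ ?_
  · filter_upwards [hm, hq, hq1] with i hmi hqi hqi1
    exact one_div_one_add_mul_le_fullBufferProb hmi hqi hqi1
  · filter_upwards [hq, hq1] with i hqi hqi1
    exact fullBufferProb_le_one hqi.le (by linarith)

lemma eventually_activityProb_pos {δ : ℝ} (hδ : 0 < δ) : ∀ᶠ x in atTop, 0 < activityProb δ x := by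
  filter_upwards [eventually_gt_atTop 1] with x hx
  have hlog : 0 < log x := log_pos hx
  unfold activityProb
  positivity

lemma isEquivalent_log_one_div_activityProb {δ : ℝ} (hδ : δ ≠ 0) :
    (fun x => log (1 / activityProb δ x)) ~[atTop] log := by
  have hloglog : (fun x => 2 * log (log x)) =o[atTop] log :=
    (isLittleO_log_id_atTop.comp_tendsto tendsto_log_atTop).const_mul_left 2
  have hexpand : (fun x => log x - (log δ + 2 * log (log x))) =ᶠ[atTop]
      fun x => log (1 / activityProb δ x) := by
    filter_upwards [eventually_gt_atTop 1] with x hx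
    have hlog : log x ≠ 0 := (log_pos hx).ne'
    rw [activityProb, one_div, log_inv, log_div (by positivity) (by positivity),
      log_mul hδ (by positivity), log_pow]
    push_cast
    ring
  exact (IsEquivalent.refl.sub_isLittleO (isLittleO_const_log_atTop.add hloglog)).congr_left hexpand

lemma isLittleO_log_one_div_activityProb {δ : ℝ} (hδ : δ ≠ 0) :
    (fun x => log (1 / activityProb δ x)) =o[atTop] fun x => x * activityProb δ x := by
  have hsq : (fun x => log x) =o[atTop] fun x => δ * log x ^ 2 := by
    have h := (isLittleO_pow_pow_atTop_of_lt (𝕜 := ℝ) one_lt_two).comp_tendsto tendsto_log_atTop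
    simpa only [Function.comp_def, pow_one] using h.const_mul_right hδ
  refine (isEquivalent_log_one_div_activityProb hδ).trans_isLittleO (hsq.congr' .rfl ?_)
  filter_upwards [eventually_ne_atTop 0] with x hx
  rw [activityProb, mul_div_cancel₀ _ hx]

lemma isEquivalent_effectiveThroughput_mul {ahat : ℝ} {N q : ι → ℝ} {m : ι → ℕ} (hahat : ahat ≠ 0)
    (hm : ∀ᶠ i in l, 0 < m i) (hq : ∀ᶠ i in l, 0 < q i)
    (hmq : Tendsto (fun i => m i * q i) l (𝓝 0))
    (hτ : (fun i => log (1 / q i)) =o[l] fun i => N i * q i) :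
    (fun i => effectiveThroughput ahat (N i) (q i) (m i) * ahat) ~[l] fun i => log (1 / q i) := by
  have hΔ : (fun i => fullBufferProb (m i) (q i)) ~[l] fun _ => 1 :=
    (isEquivalent_const_iff_tendsto one_ne_zero).2 (tendsto_fullBufferProb hm hq hmq)
  have hs : (fun i => N i * ahat * q i * fullBufferProb (m i) (q i)) ~[l]
      fun i => ahat * (N i * q i) := by
    refine (IsEquivalent.refl.mul hΔ).congr_right (.of_eq (funext fun i => ?_))
    change N i * ahat * q i * 1 = ahat * (N i * q i)
    ring
  have hτs : (fun i => log (1 / q i)) =o[l]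
      fun i => N i * ahat * q i * fullBufferProb (m i) (q i) :=
    (hτ.const_mul_right hahat).trans_isEquivalent hs.symm
  refine (isEquivalent_mul_log_one_add_div hτs).congr_left (.of_eq (funext fun i => ?_))
  rw [effectiveThroughput]
  ring

theorem effective_throughput_CAP_small_lambda_general {ahat δ : ℝ} {N : ι → ℝ} {lam : ι → ℕ}
    (hahat : ahat ≠ 0) (hδ : 0 < δ) (hN : Tendsto N l atTop) (hlam1 : ∀ᶠ i in l, 0 < lam i)
    (hlam : Tendsto (fun i => lam i * log (N i) ^ 2 / N i) l (𝓝 0)) :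
    Tendsto (fun i =>
      effectiveThroughput ahat (N i) (activityProb δ (N i)) (lam i) * ahat / log (N i))
      l (𝓝 1) := by
  have hlamq : Tendsto (fun i => lam i * activityProb δ (N i)) l (𝓝 0) := by
    convert hlam.const_mul δ using 2
    · rw [activityProb]
      ring
    · rw [mul_zero]
  have hT : (fun i => effectiveThroughput ahat (N i) (activityProb δ (N i)) (lam i) * ahat) ~[l]
      fun i => log (1 / activityProb δ (N i)) :=
    isEquivalent_effectiveThroughput_mul hahat hlam1
      (hN.eventually (eventually_activityProb_pos hδ)) hlamq
      ((isLittleO_log_one_div_activityProb hδ.ne').comp_tendsto hN)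
  have hτ : (fun i => log (1 / activityProb δ (N i))) ~[l] fun i => log (N i) :=
    (isEquivalent_log_one_div_activityProb hδ.ne').comp_tendsto hN
  have hlog : ∀ᶠ i in l, log (N i) ≠ 0 := (tendsto_log_atTop.comp hN).eventually_ne_atTop 0
  exact (isEquivalent_iff_tendsto_one hlog).1 (hT.trans hτ)

end

/-- Theorem 3, part (i) (constant arrival process, `λ = o(n/(log n)²)`):
with `q_n = δ·(log n)²/n`, `τ_n = log(1/q_n)`, positive integer delay bounds `λ_n`
with `λ_n·(log n)²/n → 0`, and full-buffer probability
`Δ_n = (1 − (1−q_n)^{λ_n})/(λ_n·q_n)`, the effective throughput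
`T_n = n·q_n·Δ_n·log(1 + τ_n/(n·ahat·q_n·Δ_n))` satisfies `T_n·ahat/log n → 1`. -/
theorem effective_throughput_CAP_small_lambda (ahat δ : ℝ) (hahat : 0 < ahat) (hδ : 0 < δ)
    (lam : ℕ → ℕ) (hlam1 : ∀ n, 0 < lam n)
    (hlam : Tendsto (fun n : ℕ => (lam n : ℝ) * (Real.log n) ^ 2 / n) atTop (nhds 0)) :
    Tendsto (fun n : ℕ =>
      let q := δ * (Real.log n) ^ 2 / n
      let τ := Real.log (1 / q)
      let Δ := (1 - (1 - q) ^ (lam n)) / ((lam n : ℝ) * q)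
      (n * q * Δ * Real.log (1 + τ / (n * ahat * q * Δ))) * ahat / Real.log n)
      atTop (nhds 1) := by
  exact effective_throughput_CAP_small_lambda_general hahat.ne' hδ tendsto_natCast_atTop_atTop
    (.of_forall hlam1) hlam
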